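/- Let p_1,…,p_m be real numbers with Σ_{i=1}^{m} p_i = 1. Then Σ_{i=1}^{m} p_i³ − (Σ_{i=1}^{m} p_i²)² = Σ_{1 ≤ i < j ≤ m} p_i·p_j·(p_i − p_j)². -/

import Mathlib

open Finset

/-- If `p_1 + ⋯ + p_m = 1`, then
`Σ p_i³ − (Σ p_i²)² = Σ_{i<j} p_i p_j (p_i − p_j)²`. -/
theorem cubic_identity (m : ℕ) (p : Fin m → ℝ) (hp : ∑ i, p i = 1) :
    (∑ i, p i ^ 3) - (∑ i, p i ^ 2) ^ 2 =
      ∑ i : Fin m, ∑ j ∈ Finset.univ.filter (fun j => i < j),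
        p i * p j * (p i - p j) ^ 2 := by
  have hfull : ∑ i : Fin m, ∑ j : Fin m, p i * p j * (p i - p j) ^ 2 =
      2 * ((∑ i, p i) * (∑ i, p i ^ 3) - (∑ i, p i ^ 2) ^ 2) := by
    have h1 : ∀ i j : Fin m, p i * p j * (p i - p j) ^ 2 =
        p i ^ 3 * p j + p i * p j ^ 3 - 2 * (p i ^ 2 * p j ^ 2) := fun i j => by ring
    simp only [h1, Finset.sum_sub_distrib, Finset.sum_add_distrib, ← Finset.mul_sum,
      ← Finset.sum_mul]
    ring
  have hswap : ∑ i : Fin m, ∑ j ∈ Finset.univ.filter (fun j => j < i),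
        p i * p j * (p i - p j) ^ 2 =
      ∑ i : Fin m, ∑ j ∈ Finset.univ.filter (fun j => i < j),
        p i * p j * (p i - p j) ^ 2 := by
    simp only [Finset.sum_filter]
    rw [Finset.sum_comm]
    refine Finset.sum_congr rfl fun i _ => Finset.sum_congr rfl fun j _ => ?_
    split_ifs
    · ring
    · rfl
  have hsplit : ∑ i : Fin m, ∑ j : Fin m, p i * p j * (p i - p j) ^ 2 =
      (∑ i : Fin m, ∑ j ∈ Finset.univ.filter (fun j => i < j),
        p i * p j * (p i - p j) ^ 2) +
      ∑ i : Fin m, ∑ j ∈ Finset.univ.filter (fun j => j < i),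
        p i * p j * (p i - p j) ^ 2 := by
    simp only [Finset.sum_filter, ← Finset.sum_add_distrib]
    refine Finset.sum_congr rfl fun i _ => Finset.sum_congr rfl fun j _ => ?_
    rcases lt_trichotomy i j with h | h | h
    · simp [h, h.not_gt]
    · simp [h]
    · simp [h, h.not_gt]
  rw [hp] at hfull
  linarith
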